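/- Let f be a strictly convex standard self-concordant function on ℝⁿ, x a point, Q the truncated approximation of A := ∇²f(x) with parameter N, λ̄ := (∇f(x)ᵀ Q⁻¹ ∇f(x))^{1/2} and d̂ := −Q⁻¹ ∇f(x). If t > 0 satisfies t λ̄ < 1 and x⁺ := x + t d̂, then (i) ∇²f(x⁺) ⪯ (1 − t λ̄)⁻² ∇²f(x), and (ii) [∇²f(x⁺)]⁻¹ ⪯ (1 − t λ̄)⁻² [∇²f(x)]⁻¹ (in the Loewner order on symmetric matrices). -/

import Mathlib

open Matrix

/-!
Along a line `s ↦ x + s • d`, self-concordance says that `s ↦ ‖d‖_{x + s • d}⁻¹` is 1-Lipschitz,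
where `‖d‖_y` is the norm of the Hessian at `y`. For another direction `v`, the derivative of
`‖v‖²_{x + s • d}` is the third derivative of `f` at `d, v, v`. It is controlled by the values of
the third derivative on the diagonal, because the norm of a symmetric trilinear form on an inner
product space is its norm on the diagonal (Banach). Integrating the resulting bound on the
logarithmic derivative of `‖v‖²_{x + s • d}` compares the Hessians at `x` and `x + t • d`, in both
directions, with the factor `(1 - t * r)²` for every `r ≥ ‖d‖_x`. Truncation only increases the
Hessian, `∇²f(x) ⪯ Q`, so `d = -Q⁻¹ ∇f(x)` satisfies `‖d‖²_x ≤ dᵀ Q d = ∇f(x)ᵀ Q⁻¹ ∇f(x)`, and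
`r = λ̄` is admissible.
-/

section CubicForms

/-- The nodes are the three unit vectors of the norm `x ^ 2 + 3 * y ^ 2` with the same triple angle;
the coordinate `y` is a sine divided by `√3`, which makes the rotation by `2π/3` rational. -/
theorem cubic_cubature (a b c d x y : ℝ) :
    let g := fun x y : ℝ => a * x ^ 3 + b * x ^ 2 * y + c * x * y ^ 2 + d * y ^ 3
    (a * (x ^ 3 - 9 * x * y ^ 2) + b * (x ^ 2 * y - y ^ 3)) * (x ^ 2 + 3 * y ^ 2) ^ 2 =
      (x ^ 2 - y ^ 2) ^ 2 * g x y +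
        (2 * y * (x + y)) ^ 2 * g (-(x + 3 * y) / 2) ((x - y) / 2) +
        (2 * y * (y - x)) ^ 2 * g (-(x - 3 * y) / 2) (-(x + y) / 2) := by
  ring

theorem abs_cubic_polar_le {a b c d M : ℝ}
    (h : ∀ x y : ℝ, x ^ 2 + 3 * y ^ 2 = 1 →
      |a * x ^ 3 + b * x ^ 2 * y + c * x * y ^ 2 + d * y ^ 3| ≤ M)
    {x y : ℝ} (hxy : x ^ 2 + 3 * y ^ 2 = 1) :
    |a * (x ^ 3 - 9 * x * y ^ 2) + b * (x ^ 2 * y - y ^ 3)| ≤ M := by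
  have cubature := cubic_cubature a b c d x y
  have weights_sum : (x ^ 2 - y ^ 2) ^ 2 + (2 * y * (x + y)) ^ 2 + (2 * y * (y - x)) ^ 2 = 1 := by
    linear_combination (x ^ 2 + 3 * y ^ 2 + 1) * hxy
  rw [hxy, one_pow, mul_one] at cubature
  rw [cubature]
  grw [abs_add_three]
  simp only [abs_mul _ (_ + _), abs_sq]
  rw [← one_mul M, ← weights_sum, add_mul, add_mul]
  gcongr
  · exact h _ _ hxy
  · exact h _ _ (by linear_combination hxy)
  · exact h _ _ (by linear_combination hxy)

theorem abs_cubic_polar_cos_sin_le {a b c d M : ℝ}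
    (h : ∀ x y : ℝ, x ^ 2 + y ^ 2 = 1 →
      |a * x ^ 3 + 3 * b * x ^ 2 * y + 3 * c * x * y ^ 2 + d * y ^ 3| ≤ M) (θ : ℝ) :
    |a * Real.cos θ + b * Real.sin θ| ≤ M := by
  have sq_sqrt_three : √3 ^ 2 = (3 : ℝ) := Real.sq_sqrt (by norm_num)
  have cubic_le : ∀ x y : ℝ, x ^ 2 + 3 * y ^ 2 = 1 →
      |a * x ^ 3 + 3 * √3 * b * x ^ 2 * y + 9 * c * x * y ^ 2 + 3 * √3 * d * y ^ 3| ≤ M := by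
    intro x y hxy
    convert h x (√3 * y) (by linear_combination hxy + y ^ 2 * sq_sqrt_three) using 2
    linear_combination (-3 * c * x * y ^ 2 - √3 * d * y ^ 3) * sq_sqrt_three
  obtain ⟨φ, rfl⟩ : ∃ φ, θ = 3 * φ := ⟨θ / 3, by ring⟩
  obtain ⟨y, hy⟩ : ∃ y, Real.sin φ = √3 * y := ⟨Real.sin φ / √3, by field_simp⟩
  have hxy : Real.cos φ ^ 2 + 3 * y ^ 2 = 1 := by
    rw [← Real.cos_sq_add_sin_sq φ, hy, mul_pow, sq_sqrt_three]
  convert abs_cubic_polar_le cubic_le hxy using 2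
  rw [Real.cos_three_mul, Real.sin_three_mul, hy]
  linear_combination (3 * a * Real.cos φ - 3 * b * √3 * y) * hxy
    - 4 * b * √3 * y ^ 3 * sq_sqrt_three

theorem abs_cubic_polar_le_mul_sqrt {a b c d M : ℝ}
    (h : ∀ x y : ℝ, x ^ 2 + y ^ 2 = 1 →
      |a * x ^ 3 + 3 * b * x ^ 2 * y + 3 * c * x * y ^ 2 + d * y ^ 3| ≤ M) (p q : ℝ) :
    |a * p + b * q| ≤ M * √(p ^ 2 + q ^ 2) := by
  set z : ℂ := ⟨p, q⟩
  have hp : p = ‖z‖ * Real.cos z.arg := (Complex.norm_mul_cos_arg z).symm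
  have hq : q = ‖z‖ * Real.sin z.arg := (Complex.norm_mul_sin_arg z).symm
  calc |a * p + b * q| = |a * Real.cos z.arg + b * Real.sin z.arg| * ‖z‖ := by
        nth_rw 1 [hp, hq]
        rw [← abs_of_nonneg (norm_nonneg z), ← abs_mul, abs_of_nonneg (norm_nonneg z)]
        ring_nf
    _ ≤ M * ‖z‖ := by gcongr; exact abs_cubic_polar_cos_sin_le h _
    _ = M * √(p ^ 2 + q ^ 2) := by rw [Complex.norm_eq_sqrt_sq_add_sq]

end CubicForms

section SymmetricTrilinearForms

open scoped RealInnerProductSpace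

section InnerProductSpace

variable {V : Type*} [NormedAddCommGroup V] [InnerProductSpace ℝ V]
  {T : V →ₗ[ℝ] V →ₗ[ℝ] V →ₗ[ℝ] ℝ} {M : ℝ}

theorem abs_trilinear_le_of_inner_eq_zero
    (hT₁₂ : ∀ u v w, T u v w = T v u w) (hT₂₃ : ∀ u v w, T u v w = T u w v)
    (hT : ∀ v, |T v v v| ≤ M * ‖v‖ ^ 3) {a e : V} (ha : ‖a‖ = 1) (he : ‖e‖ ≤ 1)
    (hae : ⟪a, e⟫ = 0) (p q : ℝ) :
    |T (p • a + q • e) a a| ≤ M * √(p ^ 2 + q ^ 2) := by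
  have hM : 0 ≤ M := by simpa [ha] using (abs_nonneg _).trans (hT a)
  have cubic_le : ∀ x y : ℝ, x ^ 2 + y ^ 2 = 1 →
      |T a a a * x ^ 3 + 3 * T a a e * x ^ 2 * y + 3 * T a e e * x * y ^ 2 + T e e e * y ^ 3|
        ≤ M := by
    intro x y hxy
    have norm_sq_le : ‖x • a + y • e‖ ^ 2 ≤ 1 := by
      rw [norm_add_sq_real, real_inner_smul_left, real_inner_smul_right, hae, norm_smul, norm_smul,
        mul_pow, mul_pow, ha, Real.norm_eq_abs, Real.norm_eq_abs, sq_abs, sq_abs]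
      nlinarith [mul_le_of_le_one_right (sq_nonneg y) (pow_le_one₀ (n := 2) (norm_nonneg e) he)]
    have norm_le : ‖x • a + y • e‖ ≤ 1 := (sq_le_one_iff₀ (norm_nonneg _)).1 norm_sq_le
    calc _ = |T (x • a + y • e) (x • a + y • e) (x • a + y • e)| := by
          simp only [map_add, map_smul, LinearMap.add_apply, LinearMap.smul_apply, smul_eq_mul,
            hT₂₃ a e a, hT₁₂ e a a, hT₂₃ e e a, hT₁₂ e a e]
          ring_nf
      _ ≤ M * ‖x • a + y • e‖ ^ 3 := hT _
      _ ≤ M := mul_le_of_le_one_right hM (pow_le_one₀ (norm_nonneg _) norm_le)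
  convert abs_cubic_polar_le_mul_sqrt cubic_le p q using 2
  simp only [map_add, map_smul, LinearMap.add_apply, LinearMap.smul_apply, smul_eq_mul, hT₁₂ e a a,
    hT₂₃ a e a]
  ring

theorem abs_trilinear_le_of_norm_eq_one
    (hT₁₂ : ∀ u v w, T u v w = T v u w) (hT₂₃ : ∀ u v w, T u v w = T u w v)
    (hT : ∀ v, |T v v v| ≤ M * ‖v‖ ^ 3) {a : V} (ha : ‖a‖ = 1) (b : V) :
    |T b a a| ≤ M * ‖b‖ := by
  set p := ⟪a, b⟫
  set w := b - p • a
  set e := ‖w‖⁻¹ • w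
  have haw : ⟪a, w⟫ = 0 := by simp [w, p, inner_sub_right, real_inner_smul_right, ha]
  have hae : ⟪a, e⟫ = 0 := by rw [real_inner_smul_right, haw, mul_zero]
  have he : ‖e‖ ≤ 1 := by
    rw [norm_smul, norm_inv, norm_norm]
    exact inv_mul_le_one
  have hwe : ‖w‖ • e = w := by
    rcases eq_or_ne w 0 with hw | hw
    · simp [hw]
    · exact smul_inv_smul₀ (norm_ne_zero_iff.2 hw) w
  have norm_b : √(p ^ 2 + ‖w‖ ^ 2) = ‖b‖ := by
    rw [Real.sqrt_eq_iff_eq_sq (by positivity) (norm_nonneg b), ← add_sub_cancel (p • a) b,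
      norm_add_sq_real, real_inner_smul_left, haw, norm_smul, ha]
    simp [w]
  have h := abs_trilinear_le_of_inner_eq_zero hT₁₂ hT₂₃ hT ha he hae p ‖w‖
  rwa [hwe, add_sub_cancel, norm_b] at h

/-- Banach's theorem for symmetric trilinear forms. -/
theorem abs_trilinear_le_of_abs_diag_le
    (hT₁₂ : ∀ u v w, T u v w = T v u w) (hT₂₃ : ∀ u v w, T u v w = T u w v)
    (hT : ∀ v, |T v v v| ≤ M * ‖v‖ ^ 3) (a b : V) :
    |T b a a| ≤ M * ‖b‖ * ‖a‖ ^ 2 := by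
  rcases eq_or_ne a 0 with rfl | ha
  · simp
  have norm_ne_zero : ‖a‖ ≠ 0 := norm_ne_zero_iff.2 ha
  have scale : T b a a = T b (‖a‖⁻¹ • a) (‖a‖⁻¹ • a) * ‖a‖ ^ 2 := by
    simp only [map_smul, LinearMap.smul_apply, smul_eq_mul]
    field_simp
  rw [scale, abs_mul, abs_sq]
  gcongr
  exact abs_trilinear_le_of_norm_eq_one hT₁₂ hT₂₃ hT (by simp [norm_smul, norm_ne_zero]) b

end InnerProductSpace

theorem abs_trilinear_le_of_posDef {V : Type*} [AddCommGroup V] [Module ℝ V]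
    {H : LinearMap.BilinForm ℝ V} (hH : ∀ u v, H u v = H v u) (hpos : ∀ v, v ≠ 0 → 0 < H v v)
    {T : V →ₗ[ℝ] V →ₗ[ℝ] V →ₗ[ℝ] ℝ}
    (hT₁₂ : ∀ u v w, T u v w = T v u w) (hT₂₃ : ∀ u v w, T u v w = T u w v) {M : ℝ}
    (hT : ∀ v, |T v v v| ≤ M * √(H v v) ^ 3) (a b : V) :
    |T b a a| ≤ M * √(H b b) * H a a := by
  have hnonneg : ∀ v, 0 ≤ H v v := fun v => by
    rcases eq_or_ne v 0 with rfl | hv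
    · simp
    · exact (hpos v hv).le
  let core : InnerProductSpace.Core ℝ V :=
    { inner := fun u v => H u v
      conj_inner_symm := fun u v => hH v u
      re_inner_nonneg := hnonneg
      add_left := by simp
      smul_left := by simp
      definite := fun v hv => by_contra fun hne => (hpos v hne).ne' hv }
  let := core.toNormedAddCommGroup
  let := InnerProductSpace.ofCore core.toCore
  have norm_eq : ∀ v : V, ‖v‖ = √(H v v) := fun v => rfl
  have h := abs_trilinear_le_of_abs_diag_le hT₁₂ hT₂₃ (M := M) (by simpa only [norm_eq]) a b
  rwa [norm_eq, norm_eq, Real.sq_sqrt (hnonneg a)] at h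

end SymmetricTrilinearForms

section DifferentialInequalities

theorem sqrt_mul_one_sub_le {φ φ' : ℝ → ℝ} (hpos : ∀ s, 0 < φ s)
    (hφ : ∀ s, HasDerivAt φ (φ' s) s) (hbound : ∀ s, φ' s ≤ 2 * √(φ s) ^ 3) {s : ℝ}
    (hs : 0 ≤ s) : √(φ s) * (1 - s * √(φ 0)) ≤ √(φ 0) := by
  have sqrt_pos : ∀ s, 0 < √(φ s) := fun s => Real.sqrt_pos.2 (hpos s)
  have mono : Monotone fun s => (√(φ s))⁻¹ + s := by
    refine monotone_of_hasDerivAt_nonneg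
      (fun s => ((hφ s).sqrt (hpos s).ne').fun_inv (sqrt_pos s).ne' |>.add (hasDerivAt_id s))
      fun s => ?_
    have h := sqrt_pos s
    calc (0 : ℝ) ≤ (2 * √(φ s) ^ 3 - φ' s) / (2 * √(φ s) ^ 3) :=
          div_nonneg (sub_nonneg.2 (hbound s)) (by positivity)
      _ = -(φ' s / (2 * √(φ s))) / √(φ s) ^ 2 + 1 := by field_simp; ring
  have inv_le : (√(φ 0))⁻¹ ≤ (√(φ s))⁻¹ + s := by simpa using mono hs
  have h0 := sqrt_pos 0
  have h1 := sqrt_pos s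
  field_simp at inv_le
  linarith

theorem mul_one_sub_sq_le {h h' : ℝ → ℝ} {r t : ℝ} (hr : 0 ≤ r) (ht : 0 ≤ t) (htr : t * r < 1)
    (hh : ∀ s, HasDerivAt h (h' s) s)
    (hbound : ∀ s ∈ Set.Icc 0 t, h' s * (1 - s * r) ≤ 2 * r * h s) :
    h t * (1 - t * r) ^ 2 ≤ h 0 := by
  have hderiv : ∀ s, HasDerivAt (fun s => h s * (1 - s * r) ^ 2)
      (h' s * (1 - s * r) ^ 2 + h s * (2 * (1 - s * r) * -r)) s := fun s => by
    simpa using (hh s).fun_mul ((((hasDerivAt_id s).mul_const r).const_sub 1).fun_pow 2)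
  have anti : AntitoneOn (fun s => h s * (1 - s * r) ^ 2) (Set.Icc 0 t) := by
    refine antitoneOn_of_hasDerivWithinAt_nonpos (convex_Icc 0 t)
      (fun s _ => (hderiv s).continuousAt.continuousWithinAt)
      (fun s _ => (hderiv s).hasDerivWithinAt) fun s hs => ?_
    have hs := interior_subset hs
    have one_sub_nonneg : 0 ≤ 1 - s * r := by nlinarith [mul_le_mul_of_nonneg_right hs.2 hr]
    linarith [mul_le_mul_of_nonneg_right (hbound s hs) one_sub_nonneg]
  simpa using anti ⟨le_rfl, ht⟩ ⟨ht, le_rfl⟩ ht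

theorem one_sub_sq_comparison {h h' ψ : ℝ → ℝ} {r t : ℝ} (hr : 0 ≤ r) (ht : 0 ≤ t)
    (htr : t * r < 1) (hpos : ∀ s, 0 < h s) (hh : ∀ s, HasDerivAt h (h' s) s)
    (hbound : ∀ s, |h' s| ≤ 2 * ψ s * h s) (hψ : ∀ s, 0 ≤ s → ψ s * (1 - s * r) ≤ r) :
    h t * (1 - t * r) ^ 2 ≤ h 0 ∧ h 0 * (1 - t * r) ^ 2 ≤ h t := by
  have mul_one_sub_le : ∀ s ∈ Set.Icc 0 t, ∀ y ≤ |h' s|, y * (1 - s * r) ≤ 2 * r * h s := by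
    intro s hs y hy
    have one_sub_nonneg : 0 ≤ 1 - s * r := by nlinarith [mul_le_mul_of_nonneg_right hs.2 hr]
    calc y * (1 - s * r) ≤ 2 * ψ s * h s * (1 - s * r) := by gcongr; exact hy.trans (hbound s)
      _ = 2 * (ψ s * (1 - s * r)) * h s := by ring
      _ ≤ 2 * r * h s := by
        gcongr
        · exact (hpos s).le
        · exact hψ s hs.1
  refine ⟨mul_one_sub_sq_le hr ht htr hh fun s hs => mul_one_sub_le s hs _ (le_abs_self _), ?_⟩
  have inv_bound : ∀ s ∈ Set.Icc 0 t, -h' s / h s ^ 2 * (1 - s * r) ≤ 2 * r * (h s)⁻¹ :=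
    fun s hs => by
      have h1 := mul_one_sub_le s hs _ (neg_le_abs _)
      have h2 := hpos s
      field_simp
      linarith
  have inv_le : (h t)⁻¹ * (1 - t * r) ^ 2 ≤ (h 0)⁻¹ :=
    mul_one_sub_sq_le hr ht htr (fun s => (hh s).fun_inv (hpos s).ne') inv_bound
  rwa [inv_mul_le_iff₀ (hpos t), ← div_eq_mul_inv, le_div_iff₀' (hpos 0)] at inv_le

end DifferentialInequalities

section HessianForm

variable {E F : Type*} [NormedAddCommGroup E] [NormedSpace ℝ E] [NormedAddCommGroup F]
  [NormedSpace ℝ F]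

/-- The second derivative of `f` at `x`, as a bilinear form. -/
noncomputable def hessianForm (f : E → ℝ) (x : E) : E →L[ℝ] E →L[ℝ] ℝ :=
  fderiv ℝ (fderiv ℝ f) x

/-- The third derivative of `f` at `x`, as a trilinear form. -/
noncomputable def thirdForm (f : E → ℝ) (x : E) : E →L[ℝ] E →L[ℝ] E →L[ℝ] ℝ :=
  fderiv ℝ (hessianForm f) x

/-- The norm `‖v‖_x = (vᵀ ∇²f(x) v)^{1/2}` attached to `f` at the point `x`, in which
self-concordance measures the variation of the Hessian. -/
noncomputable def localNorm (f : E → ℝ) (x v : E) : ℝ :=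
  √(hessianForm f x v v)

theorem hasDerivAt_comp_line {g : E → F} (hg : Differentiable ℝ g) (x u : E)
    (t : ℝ) : HasDerivAt (fun s : ℝ => g (x + s • u)) (fderiv ℝ g (x + t • u) u) t :=
  (hg _).hasFDerivAt.comp_hasDerivAt t
    (by simpa using ((hasDerivAt_id t).smul_const u).const_add x)

variable {f : E → ℝ}

theorem iteratedDeriv_two_comp_line (hf : ContDiff ℝ 2 f) (x u : E) :
    iteratedDeriv 2 (fun t : ℝ => f (x + t • u)) = fun t => hessianForm f (x + t • u) u u := by
  have hf' : Differentiable ℝ (fderiv ℝ f) :=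
    (hf.fderiv_right (m := 1) (by norm_num)).differentiable (by norm_num)
  have deriv_eq : deriv (fun t : ℝ => f (x + t • u)) = fun t => fderiv ℝ f (x + t • u) u :=
    funext fun t => (hasDerivAt_comp_line (hf.differentiable (by norm_num)) x u t).deriv
  rw [iteratedDeriv_succ, iteratedDeriv_one, deriv_eq]
  funext t
  have hline : HasDerivAt (fun s : ℝ => fderiv ℝ f (x + s • u)) (hessianForm f (x + t • u) u) t :=
    hasDerivAt_comp_line hf' x u t
  simpa using (hline.clm_apply (hasDerivAt_const t u)).deriv

theorem hasDerivAt_hessianForm_comp_line (hf : ContDiff ℝ 3 f) (x d v w : E) (t : ℝ) :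
    HasDerivAt (fun s : ℝ => hessianForm f (x + s • d) v w) (thirdForm f (x + t • d) d v w) t := by
  have hf' : ContDiff ℝ 2 (fderiv ℝ f) := hf.fderiv_right (by norm_num)
  have hf'' : Differentiable ℝ (hessianForm f) :=
    (hf'.fderiv_right (m := 1) (by norm_num)).differentiable (by norm_num)
  have hline : HasDerivAt (fun s : ℝ => hessianForm f (x + s • d)) (thirdForm f (x + t • d) d) t :=
    hasDerivAt_comp_line (F := E →L[ℝ] E →L[ℝ] ℝ) hf'' x d t
  simpa using (hline.clm_apply (hasDerivAt_const t v)).clm_apply (hasDerivAt_const t w)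

theorem iteratedDeriv_three_comp_line (hf : ContDiff ℝ 3 f) (x u : E) :
    iteratedDeriv 3 (fun t : ℝ => f (x + t • u)) = fun t => thirdForm f (x + t • u) u u u := by
  rw [iteratedDeriv_succ, iteratedDeriv_two_comp_line (hf.of_le (by norm_num))]
  exact funext fun t => (hasDerivAt_hessianForm_comp_line hf x u u u t).deriv

theorem hessianForm_symm (hf : ContDiff ℝ 2 f) (x u v : E) :
    hessianForm f x u v = hessianForm f x v u :=
  hf.contDiffAt.isSymmSndFDerivAt (by simp) u v

theorem thirdForm_symm_left (hf : ContDiff ℝ 3 f) (x u v w : E) :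
    thirdForm f x u v w = thirdForm f x v u w := by
  have hf' : ContDiff ℝ 2 (fderiv ℝ f) := hf.fderiv_right (by norm_num)
  exact DFunLike.congr_fun (hf'.contDiffAt.isSymmSndFDerivAt (by simp) u v) w

theorem thirdForm_symm_right (hf : ContDiff ℝ 3 f) (x u v w : E) :
    thirdForm f x u v w = thirdForm f x u w v := by
  have h := hasDerivAt_hessianForm_comp_line hf x u v w 0
  simp only [hessianForm_symm (hf.of_le (by norm_num)) _ v w] at h
  simpa using h.unique (hasDerivAt_hessianForm_comp_line hf x u w v 0)

end HessianForm

section SelfConcordance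

variable {E : Type*} [NormedAddCommGroup E] [NormedSpace ℝ E] {f : E → ℝ}

/-- Standard self-concordance, stated as in the literature through the restrictions
`φ t = f (x + t • u)` of `f` to lines: `|φ'''| ≤ 2 φ'' ^ (3 / 2)`. Convexity is not part of the
structure; it enters through the positivity of the Hessian. -/
structure SelfConcordant (f : E → ℝ) : Prop where
  contDiff : ContDiff ℝ 3 f
  abs_iteratedDeriv_three_le : ∀ (x u : E) (t : ℝ),
    |iteratedDeriv 3 (fun s : ℝ => f (x + s • u)) t|
      ≤ 2 * iteratedDeriv 2 (fun s : ℝ => f (x + s • u)) t ^ ((3 : ℝ) / 2)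

namespace SelfConcordant

theorem abs_thirdForm_diag_le (hf : SelfConcordant f) {x v : E} (h : 0 ≤ hessianForm f x v v) :
    |thirdForm f x v v v| ≤ 2 * localNorm f x v ^ 3 := by
  have hline := hf.abs_iteratedDeriv_three_le x v 0
  rw [iteratedDeriv_three_comp_line hf.contDiff,
    iteratedDeriv_two_comp_line (hf.contDiff.of_le (by norm_num))] at hline
  simp only [zero_smul, add_zero] at hline
  rwa [Real.rpow_div_two_eq_sqrt _ h, Real.rpow_ofNat] at hline

theorem abs_thirdForm_le (hf : SelfConcordant f) {x : E}
    (hpos : ∀ v, v ≠ 0 → 0 < hessianForm f x v v) (d v : E) :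
    |thirdForm f x d v v| ≤ 2 * localNorm f x d * hessianForm f x v v := by
  have hnonneg : ∀ v, 0 ≤ hessianForm f x v v := fun v => by
    rcases eq_or_ne v 0 with rfl | hv
    · simp
    · exact (hpos v hv).le
  let T : E →ₗ[ℝ] E →ₗ[ℝ] E →ₗ[ℝ] ℝ :=
    { toFun := fun u => (thirdForm f x u).toBilinForm
      map_add' := fun u v => by ext; simp
      map_smul' := fun c u => by ext; simp }
  exact abs_trilinear_le_of_posDef (H := (hessianForm f x).toBilinForm) (T := T)
    (hessianForm_symm (hf.contDiff.of_le (by norm_num)) x) hpos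
    (thirdForm_symm_left hf.contDiff x) (thirdForm_symm_right hf.contDiff x)
    (fun v => hf.abs_thirdForm_diag_le (hnonneg v)) v d

theorem localNorm_comp_line_le (hf : SelfConcordant f)
    (hpos : ∀ x v : E, v ≠ 0 → 0 < hessianForm f x v v) (x d : E) {s : ℝ} (hs : 0 ≤ s) :
    localNorm f (x + s • d) d * (1 - s * localNorm f x d) ≤ localNorm f x d := by
  rcases eq_or_ne d 0 with rfl | hd
  · simp [localNorm]
  · simpa [localNorm] using sqrt_mul_one_sub_le (fun s => hpos (x + s • d) d hd)
      (hasDerivAt_hessianForm_comp_line hf.contDiff x d d d)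
      (fun s => (le_abs_self _).trans (hf.abs_thirdForm_diag_le (hpos _ d hd).le)) hs

theorem hessianForm_comparison (hf : SelfConcordant f)
    (hpos : ∀ x v : E, v ≠ 0 → 0 < hessianForm f x v v) (x d v : E)
    {r t : ℝ} (hr : localNorm f x d ≤ r) (ht : 0 ≤ t) (htr : t * r < 1) :
    hessianForm f (x + t • d) v v * (1 - t * r) ^ 2 ≤ hessianForm f x v v ∧
      hessianForm f x v v * (1 - t * r) ^ 2 ≤ hessianForm f (x + t • d) v v := by
  rcases eq_or_ne v 0 with rfl | hv
  · simp
  have localNorm_le : ∀ s : ℝ, 0 ≤ s → localNorm f (x + s • d) d * (1 - s * r) ≤ r :=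
    fun s hs => by
      have nonneg : 0 ≤ localNorm f (x + s • d) d := Real.sqrt_nonneg _
      calc localNorm f (x + s • d) d * (1 - s * r)
          ≤ localNorm f (x + s • d) d * (1 - s * localNorm f x d) := by gcongr
        _ ≤ localNorm f x d := hf.localNorm_comp_line_le hpos x d hs
        _ ≤ r := hr
  simpa using one_sub_sq_comparison ((Real.sqrt_nonneg _).trans hr) ht htr
    (fun s => hpos (x + s • d) v hv) (hasDerivAt_hessianForm_comp_line hf.contDiff x d v v)
    (fun s => hf.abs_thirdForm_le (hpos (x + s • d)) d v) localNorm_le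

end SelfConcordant

end SelfConcordance

section LoewnerOrder

variable {ι : Type*} [Fintype ι]

theorem posSemidef_sub_iff_dotProduct_mulVec_le {A B : Matrix ι ι ℝ} (hA : A.IsHermitian)
    (hB : B.IsHermitian) :
    (B - A).PosSemidef ↔ ∀ v : ι → ℝ, v ⬝ᵥ (A *ᵥ v) ≤ v ⬝ᵥ (B *ᵥ v) := by
  rw [posSemidef_iff_dotProduct_mulVec, and_iff_right (hB.sub hA)]
  simp [sub_mulVec, dotProduct_sub]

variable [DecidableEq ι]

/-- Both differences are Schur complements of the block matrix `[B, 1; 1, A⁻¹]`. -/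
theorem posSemidef_inv_sub_inv {K : Type*} [Field K] [PartialOrder K] [StarRing K]
    [StarOrderedRing K] {A B : Matrix ι ι K} (hA : A.PosDef) (hB : B.PosDef)
    (hAB : (B - A).PosSemidef) : (A⁻¹ - B⁻¹).PosSemidef := by
  have := hA.isUnit.invertible
  have := hB.isUnit.invertible
  have := hA.inv.isUnit.invertible
  have hblock : (fromBlocks B 1 1ᴴ A⁻¹).PosSemidef := by
    rw [PosDef.fromBlocks₂₂ _ _ hA.inv]
    simpa using hAB
  simpa using (PosDef.fromBlocks₁₁ _ _ hB).1 hblock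

theorem posSemidef_of_orthonormal_eigenvectors {A : Matrix ι ι ℝ} {u : ι → ι → ℝ} {σ : ι → ℝ}
    (hu : ∀ i j, u i ⬝ᵥ u j = if i = j then (1 : ℝ) else 0) (hA : ∀ i, A *ᵥ u i = σ i • u i)
    (hσ : ∀ i, 0 ≤ σ i) : A.PosSemidef := by
  set U : Matrix ι ι ℝ := Matrix.of u
  have hUU : U * Uᵀ = 1 := by
    ext i j
    rw [one_apply, ← hu i j]
    rfl
  have diagonalization : A * Uᵀ = Uᵀ * diagonal σ := by
    ext i j
    rw [mul_diagonal, mul_comm]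
    exact congrFun (hA j) i
  have spectral : A = Uᴴ * diagonal σ * U := by
    rw [conjTranspose_eq_transpose_of_trivial, ← diagonalization, Matrix.mul_assoc,
      mul_eq_one_comm.1 hUU, Matrix.mul_one]
  rw [spectral]
  exact (PosSemidef.diagonal hσ).conjTranspose_mul_mul_same U

theorem posSemidef_sub_of_orthonormal_eigenvectors {A B : Matrix ι ι ℝ} {u : ι → ι → ℝ}
    {α β : ι → ℝ} (hu : ∀ i j, u i ⬝ᵥ u j = if i = j then (1 : ℝ) else 0)
    (hA : ∀ i, A *ᵥ u i = α i • u i) (hB : ∀ i, B *ᵥ u i = β i • u i) (hαβ : ∀ i, α i ≤ β i) :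
    (B - A).PosSemidef :=
  posSemidef_of_orthonormal_eigenvectors hu (σ := β - α)
    (fun i => by rw [sub_mulVec, hA, hB, ← sub_smul, Pi.sub_apply])
    fun i => sub_nonneg.2 (hαβ i)

theorem loewner_comparison {A B : Matrix ι ι ℝ} (hA : A.PosDef) (hB : B.PosDef) {c : ℝ}
    (hc : 0 < c) (hBA : (A - c • B).PosSemidef) (hAB : (B - c • A).PosSemidef) :
    (c⁻¹ • A - B).PosSemidef ∧ (c⁻¹ • A⁻¹ - B⁻¹).PosSemidef := by
  have inv_smul_eq : (c • A)⁻¹ = c⁻¹ • A⁻¹ :=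
    inv_smul' A (Units.mk0 c hc.ne') ((isUnit_iff_isUnit_det A).1 hA.isUnit)
  constructor
  · simpa [smul_sub, smul_smul, hc.ne'] using hBA.smul (inv_nonneg.2 hc.le)
  · simpa [inv_smul_eq] using posSemidef_inv_sub_inv (hA.smul hc) hB hAB

theorem dotProduct_mulVec_neg_inv_mulVec {R : Type*} [CommRing R] {Q : Matrix ι ι R}
    (hQ : IsUnit Q) (g : ι → R) : -(Q⁻¹ *ᵥ g) ⬝ᵥ (Q *ᵥ -(Q⁻¹ *ᵥ g)) = g ⬝ᵥ (Q⁻¹ *ᵥ g) := by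
  rw [mulVec_neg, neg_dotProduct_neg, mulVec_mulVec,
    mul_nonsing_inv _ ((isUnit_iff_isUnit_det Q).1 hQ), one_mulVec, dotProduct_comm]

end LoewnerOrder

section CoordinateSpace

variable {ι : Type*} [Fintype ι] {f : (ι → ℝ) → ℝ} {hess : (ι → ℝ) → Matrix ι ι ℝ}

theorem hessianForm_eq_dotProduct_mulVec (hf : ContDiff ℝ 2 f)
    (hhess : ∀ x u : ι → ℝ,
      iteratedDeriv 2 (fun t : ℝ => f (x + t • u)) 0 = u ⬝ᵥ (hess x *ᵥ u)) (x u : ι → ℝ) :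
    hessianForm f x u u = u ⬝ᵥ (hess x *ᵥ u) := by
  rw [← hhess, iteratedDeriv_two_comp_line hf]
  simp

theorem stmt11_general [DecidableEq ι] (hf : SelfConcordant f)
    (hhess : ∀ x u : ι → ℝ,
      iteratedDeriv 2 (fun t : ℝ => f (x + t • u)) 0 = u ⬝ᵥ (hess x *ᵥ u))
    (hpd : ∀ x, (hess x).PosDef) {x : ι → ℝ} {Q : Matrix ι ι ℝ} (hQ : (Q - hess x).PosSemidef)
    (g : ι → ℝ) {t : ℝ} (ht : 0 ≤ t) (htl : t * √(g ⬝ᵥ (Q⁻¹ *ᵥ g)) < 1) :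
    (((1 - t * √(g ⬝ᵥ (Q⁻¹ *ᵥ g))) ^ 2)⁻¹ • hess x - hess (x + t • -(Q⁻¹ *ᵥ g))).PosSemidef ∧
    (((1 - t * √(g ⬝ᵥ (Q⁻¹ *ᵥ g))) ^ 2)⁻¹ • (hess x)⁻¹
        - (hess (x + t • -(Q⁻¹ *ᵥ g)))⁻¹).PosSemidef := by
  have form_eq := hessianForm_eq_dotProduct_mulVec (hf.contDiff.of_le (by norm_num)) hhess
  have form_pos : ∀ y v, v ≠ 0 → 0 < hessianForm f y v v := fun y v hv => by
    simpa [form_eq] using (hpd y).dotProduct_mulVec_pos hv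
  have hQpd : Q.PosDef := by simpa using (hpd x).add_posSemidef hQ
  set d := -(Q⁻¹ *ᵥ g) with hd
  set r := √(g ⬝ᵥ (Q⁻¹ *ᵥ g)) with hr
  have localNorm_le : localNorm f x d ≤ r := by
    rw [hr, ← dotProduct_mulVec_neg_inv_mulVec hQpd.isUnit, ← hd, localNorm, form_eq]
    exact Real.sqrt_le_sqrt
      ((posSemidef_sub_iff_dotProduct_mulVec_le (hpd x).1 hQpd.1).1 hQ d)
  have comparison := fun v => hf.hessianForm_comparison form_pos x d v localNorm_le ht htl
  have smul_herm : ∀ y, ((1 - t * r) ^ 2 • hess y).IsHermitian := fun y => by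
    rw [IsHermitian, conjTranspose_smul, star_trivial, (hpd y).1.eq]
  refine loewner_comparison (hpd x) (hpd _) (pow_pos (sub_pos.2 htl) 2)
    ((posSemidef_sub_iff_dotProduct_mulVec_le (smul_herm _) (hpd _).1).2 fun v => ?_)
    ((posSemidef_sub_iff_dotProduct_mulVec_le (smul_herm _) (hpd _).1).2 fun v => ?_)
  · simpa [form_eq, smul_mulVec, mul_comm] using (comparison v).1
  · simpa [form_eq, smul_mulVec, mul_comm] using (comparison v).2

end CoordinateSpace

/-- Let `f` be strictly convex standard self-concordant, `x`
a point, `Q` the truncated approximation of `∇²f(x)` with parameter `N`,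
`λ̄ = (∇f(x)ᵀ Q⁻¹ ∇f(x))^{1/2}`, `d̂ = −Q⁻¹ ∇f(x)`.  If `t > 0` satisfies
`t λ̄ < 1` and `x⁺ := x + t d̂`, then `∇²f(x⁺) ⪯ (1 − t λ̄)⁻² ∇²f(x)` and
`[∇²f(x⁺)]⁻¹ ⪯ (1 − t λ̄)⁻² [∇²f(x)]⁻¹` in the Loewner order. -/
theorem stmt11 {n N : ℕ} (hN : 1 ≤ N) (hNn : N < n)
    (f : (Fin n → ℝ) → ℝ) (grad : (Fin n → ℝ) → Fin n → ℝ)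
    (hess : (Fin n → ℝ) → Matrix (Fin n) (Fin n) ℝ)
    (hf : ContDiff ℝ 3 f)
    (hconv : StrictConvexOn ℝ Set.univ f)
    (hgrad : ∀ x u : Fin n → ℝ, deriv (fun t : ℝ => f (x + t • u)) 0 = grad x ⬝ᵥ u)
    (hhessq : ∀ x u : Fin n → ℝ,
      iteratedDeriv 2 (fun t : ℝ => f (x + t • u)) 0 = u ⬝ᵥ (hess x *ᵥ u))
    (hhsymm : ∀ x, (hess x).IsSymm)
    (hhpd : ∀ x, (hess x).PosDef)
    (hsc : ∀ x u : Fin n → ℝ, ∀ t : ℝ,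
      |iteratedDeriv 3 (fun s : ℝ => f (x + s • u)) t|
        ≤ 2 * iteratedDeriv 2 (fun s : ℝ => f (x + s • u)) t ^ ((3 : ℝ) / 2))
    (hclosed : ∀ c : ℝ, IsClosed {x | f x ≤ c})
    (hbdd : BddBelow (Set.range f))
    (x : Fin n → ℝ)
    (σ : Fin n → ℝ) (u : Fin n → Fin n → ℝ)
    (hσpos : ∀ i, 0 < σ i)
    (hσmono : ∀ i j : Fin n, i ≤ j → σ j ≤ σ i)
    (hortho : ∀ i j : Fin n, u i ⬝ᵥ u j = if i = j then (1 : ℝ) else 0)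
    (heig : ∀ i, hess x *ᵥ u i = σ i • u i)
    (Q : Matrix (Fin n) (Fin n) ℝ) (hQsymm : Q.IsSymm)
    (hQeig : ∀ i : Fin n, Q *ᵥ u i = (if (i : ℕ) < N then σ i else σ ⟨N, hNn⟩) • u i)
    (lambar : ℝ) (hlambar : lambar = Real.sqrt (grad x ⬝ᵥ (Q⁻¹ *ᵥ grad x)))
    (t : ℝ) (ht : 0 < t) (htl : t * lambar < 1) :
    (((1 - t * lambar) ^ 2)⁻¹ • hess x - hess (x + t • -(Q⁻¹ *ᵥ grad x))).PosSemidef ∧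
    (((1 - t * lambar) ^ 2)⁻¹ • (hess x)⁻¹
        - (hess (x + t • -(Q⁻¹ *ᵥ grad x)))⁻¹).PosSemidef := by
  subst hlambar
  have hQ : (Q - hess x).PosSemidef :=
    posSemidef_sub_of_orthonormal_eigenvectors hortho heig hQeig fun i => by
      split_ifs with hi
      exacts [le_rfl, hσmono _ _ (not_lt.1 hi)]
  exact stmt11_general ⟨hf, hsc⟩ hhessq hhpd hQ (grad x) ht.le htl
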